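/- Let H be a real Hilbert space of functions on a set X with reproducing kernel k, let μ and ν be probability measures on X for which the feature map x ↦ k(x,·) is Bochner integrable, and suppose every f ∈ H is integrable with respect to μ and ν. Then the maximum mean discrepancy satisfies MMD(μ, ν) = ‖∫ k(x,·) μ(dx) − ∫ k(x,·) ν(dx)‖_H, i.e., the supremum over the unit ball of H of |∫ f dμ − ∫ f dν| equals the norm of the difference of the kernel mean embeddings of μ and ν. -/

import Mathlib

open MeasureTheory
open scoped RealInnerProductSpace

/-- In an RKHS `H` on `X`, for probability measures `μ`, `ν` with Bochner
integrable feature maps and with every `f ∈ H` integrable, the maximum mean discrepancy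
(the supremum over the unit ball of `H` of `|∫ f dμ − ∫ f dν|`) equals the norm of the
difference of the kernel mean embeddings. -/
theorem mmd_eq_norm_sub_meanEmbedding
    {X : Type*} [MeasurableSpace X]
    {H : Type*} [NormedAddCommGroup H] [InnerProductSpace ℝ H] [CompleteSpace H]
    (ev : H → X → ℝ) (φ : X → H) (k : X → X → ℝ)
    (hk : ∀ x y : X, ev (φ x) y = k x y)
    (hrepr : ∀ (f : H) (x : X), ev f x = ⟪φ x, f⟫)
    (μ ν : Measure X) [IsProbabilityMeasure μ] [IsProbabilityMeasure ν]
    (hφμ : Integrable φ μ) (hφν : Integrable φ ν)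
    (hintμ : ∀ f : H, Integrable (ev f) μ)
    (hintν : ∀ f : H, Integrable (ev f) ν) :
    (⨆ f : {g : H // ‖g‖ ≤ 1}, |(∫ x, ev f.1 x ∂μ) - ∫ x, ev f.1 x ∂ν|)
      = ‖(∫ x, φ x ∂μ) - ∫ x, φ x ∂ν‖ := by
  have key : ∀ f : H, (∫ x, ev f x ∂μ) - ∫ x, ev f x ∂ν
      = ⟪f, (∫ x, φ x ∂μ) - ∫ x, φ x ∂ν⟫ := by
    intro f
    rw [inner_sub_right, ← integral_inner hφμ, ← integral_inner hφν]
    simp only [hrepr, real_inner_comm]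
  simp only [key]
  generalize (∫ x, φ x ∂μ) - ∫ x, φ x ∂ν = d
  have hle : ∀ f : {g : H // ‖g‖ ≤ 1}, |⟪f.1, d⟫| ≤ ‖d‖ := by
    intro f
    calc |⟪f.1, d⟫| ≤ ‖f.1‖ * ‖d‖ := abs_real_inner_le_norm _ _
      _ ≤ 1 * ‖d‖ := mul_le_mul_of_nonneg_right f.2 (norm_nonneg _)
      _ = ‖d‖ := one_mul _
  haveI : Nonempty {g : H // ‖g‖ ≤ 1} := ⟨⟨0, by simp⟩⟩
  refine le_antisymm (ciSup_le hle) ?_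
  have hbdd : BddAbove (Set.range fun f : {g : H // ‖g‖ ≤ 1} => |⟪f.1, d⟫|) :=
    ⟨‖d‖, by rintro _ ⟨f, rfl⟩; exact hle f⟩
  by_cases hd : d = 0
  · subst hd
    simp
  · have hn : ‖d‖ ≠ 0 := norm_ne_zero_iff.mpr hd
    refine le_ciSup_of_le hbdd ⟨‖d‖⁻¹ • d, ?_⟩ ?_
    · rw [norm_smul, norm_inv, norm_norm, inv_mul_cancel₀ hn]
    · rw [real_inner_smul_left, real_inner_self_eq_norm_sq]
      have : ‖d‖⁻¹ * ‖d‖ ^ 2 = ‖d‖ := by field_simp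
      rw [this]
      exact le_abs_self _
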